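/- arXiv:2410.10239 — 2 statements merged into one kernel-verified Lean document; each statement's English description precedes it below -/
import Mathlib

section
/- Let α ∈ (0,1) and let Y and Z be real-valued random variables, each with a density on ℝ, such that Y + Z also has a density. Let F_Y, F_Z, F_{Y+Z} be their cumulative distribution functions, set U_Y = F_Y(Y), U_Z = F_Z(Z), U_{Y+Z} = F_{Y+Z}(Y+Z), and A_Y = 1_{{U_Y ≥ α}}, A_Z = 1_{{U_Z ≥ α}}, A_{Y+Z} = 1_{{U_{Y+Z} ≥ α}}. If E(Y·A_Y) + E(Z·A_Z) − E((Y+Z)·A_{Y+Z}) = 0, then the events {U_Y ≥ α}, {U_Z ≥ α} and {U_{Y+Z} ≥ α} coincide almost surely. -/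
open MeasureTheory ProbabilityTheory Filter Matrix Set

noncomputable section

/-- Value-at-Risk at level `α` of a real random variable `W` under `μ`:
`min {M : ℝ | ℙ(W ≤ M) ≥ α}`. -/
def VaR {Ω : Type*} [MeasurableSpace Ω] (μ : Measure Ω) (α : ℝ) (W : Ω → ℝ) : ℝ :=
  sInf {M : ℝ | α ≤ (μ {ω | W ω ≤ M}).toReal}

/-- Conditional Value-at-Risk `E(W | W ≥ VaR_α(W))`. -/
def CVaR {Ω : Type*} [MeasurableSpace Ω] (μ : Measure Ω) (α : ℝ) (W : Ω → ℝ) : ℝ :=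
  ((μ {ω | VaR μ α W ≤ W ω}).toReal)⁻¹ * ∫ ω in {ω | VaR μ α W ≤ W ω}, W ω ∂μ

/-- Rockafellar–Uryasev auxiliary function `g(γ, ζ) = ζ + (1-α)⁻¹ E[(-γᵀX - ζ)⁺]`. -/
def gAux {Ω : Type*} [MeasurableSpace Ω] (μ : Measure Ω) {d : ℕ} (α : ℝ)
    (X : Ω → Fin d → ℝ) (γ : Fin d → ℝ) (ζ : ℝ) : ℝ :=
  ζ + (1 - α)⁻¹ * ∫ ω, max (-(γ ⬝ᵥ X ω) - ζ) 0 ∂μ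

/-- Empirical counterpart of `gAux`, built from the sample `Xs 0, …, Xs (N-1)`. -/
def gAuxN {Ω : Type*} [MeasurableSpace Ω] {d : ℕ} (α : ℝ)
    (Xs : ℕ → Ω → Fin d → ℝ) (N : ℕ) (γ : Fin d → ℝ) (ζ : ℝ) (ω : Ω) : ℝ :=
  ζ + (1 - α)⁻¹ * ((N : ℝ)⁻¹ * ∑ j ∈ Finset.range N, max (-(γ ⬝ᵥ Xs j ω) - ζ) 0)

/-- `x` solves the problem: minimize `f` over `s` subject to `c ≤ K`. -/
def Solves {E : Type*} (f c : E → ℝ) (K : ℝ) (s : Set E) (x : E) : Prop :=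
  x ∈ s ∧ c x ≤ K ∧ ∀ y ∈ s, c y ≤ K → f x ≤ f y

/-- Deviation of the set `A` from the set `B`: `sup_{x ∈ A} inf_{y ∈ B} ‖x - y‖`. -/
def setDev {E : Type*} [PseudoMetricSpace E] (A B : Set E) : ℝ :=
  ⨆ x ∈ A, ⨅ y ∈ B, dist x y

/-- The set of minimizers of `f` on `s`. -/
def argminSet {E : Type*} (f : E → ℝ) (s : Set E) : Set E :=
  {x ∈ s | ∀ y ∈ s, f x ≤ f y}

/-- Support of a measure on `ℝ`: points all of whose neighborhoods have positive measure. -/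
def measSupport (ν : Measure ℝ) : Set ℝ := {x | ∀ s ∈ nhds x, ν s ≠ 0}

/-! Let `A` be the tail event `{q ≤ W}`. Passing from `W` to `W - q` changes `∫ ω in A, W ω` and
`∫ ω in B, W ω` equally when `μ A = μ B`, and `W - q` is nonnegative exactly on `A`; hence the
difference of the two integrals is `∫ |W - q|` over `A ∆ B`. So `A` maximizes the integral of `W`
among events of its probability, and it is the only maximizer up to null sets. When the laws have
no atoms, the three events of the theorem are tail events of probability `1 - α`, and the
hypothesis says that the event of `Y + Z` is a maximizer for both `Y` and `Z`. -/

section TailIntegral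

variable {Ω : Type*} [MeasurableSpace Ω] {μ : Measure Ω} [IsFiniteMeasure μ] {W : Ω → ℝ} {q : ℝ}
  {B : Set Ω}

theorem setIntegral_tail_sub_setIntegral (hW : Integrable W μ) (hB : NullMeasurableSet B μ)
    (hμ : μ.real {ω | q ≤ W ω} = μ.real B) :
    ∫ ω in {ω | q ≤ W ω}, W ω ∂μ - ∫ ω in B, W ω ∂μ =
      ∫ ω in symmDiff {ω | q ≤ W ω} B, |W ω - q| ∂μ := by
  set A : Set Ω := {ω | q ≤ W ω} with hA_def
  have hA : NullMeasurableSet A μ := nullMeasurableSet_le aemeasurable_const hW.aemeasurable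
  have hWq : Integrable (fun ω => W ω - q) μ := hW.sub (integrable_const q)
  have indicator_diff (ω : Ω) :
      A.indicator (fun ω => W ω - q) ω - B.indicator (fun ω => W ω - q) ω =
        (symmDiff A B).indicator (fun ω => |W ω - q|) ω := by
    rcases le_or_gt q (W ω) with hq_le | hlt_q <;> by_cases hωB : ω ∈ B
    · simp [indicator, mem_symmDiff, hA_def, hωB, hq_le]
    · simp [indicator, mem_symmDiff, hA_def, hωB, hq_le, abs_of_nonneg]
    · simp [indicator, mem_symmDiff, hA_def, hωB, hlt_q.not_ge, abs_of_neg, hlt_q]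
    · simp [indicator, mem_symmDiff, hA_def, hωB, hlt_q.not_ge]
  calc ∫ ω in A, W ω ∂μ - ∫ ω in B, W ω ∂μ
      = ∫ ω in A, (W ω - q) ∂μ - ∫ ω in B, (W ω - q) ∂μ := by
        rw [integral_sub hW.integrableOn (integrable_const q),
          integral_sub hW.integrableOn (integrable_const q), setIntegral_const, setIntegral_const,
          hμ, sub_sub_sub_cancel_right]
    _ = ∫ ω, (A.indicator (fun ω => W ω - q) ω - B.indicator (fun ω => W ω - q) ω) ∂μ := by
        rw [integral_sub (hWq.indicator₀ hA) (hWq.indicator₀ hB), integral_indicator₀ hA,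
          integral_indicator₀ hB]
    _ = ∫ ω in symmDiff A B, |W ω - q| ∂μ := by
        simp_rw [indicator_diff]
        exact integral_indicator₀ (hA.symmDiff hB)

theorem setIntegral_le_setIntegral_tail (hW : Integrable W μ) (hB : NullMeasurableSet B μ)
    (hμ : μ.real {ω | q ≤ W ω} = μ.real B) :
    ∫ ω in B, W ω ∂μ ≤ ∫ ω in {ω | q ≤ W ω}, W ω ∂μ := by
  rw [← sub_nonneg, setIntegral_tail_sub_setIntegral hW hB hμ]
  exact integral_nonneg fun ω => abs_nonneg (W ω - q)

theorem tail_ae_eq_of_setIntegral_tail_le (hW : Integrable W μ) (hB : NullMeasurableSet B μ)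
    (hμ : μ.real {ω | q ≤ W ω} = μ.real B)
    (hle : ∫ ω in {ω | q ≤ W ω}, W ω ∂μ ≤ ∫ ω in B, W ω ∂μ) :
    {ω | q ≤ W ω} =ᵐ[μ] B := by
  set A : Set Ω := {ω | q ≤ W ω}
  have hA : NullMeasurableSet A μ := nullMeasurableSet_le aemeasurable_const hW.aemeasurable
  have integral_eq_zero : ∫ ω in symmDiff A B, |W ω - q| ∂μ = 0 := by
    rw [← setIntegral_tail_sub_setIntegral hW hB hμ, sub_eq_zero]
    exact hle.antisymm (setIntegral_le_setIntegral_tail hW hB hμ)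
  have eq_on_symmDiff : ∀ᵐ ω ∂μ, ω ∈ symmDiff A B → |W ω - q| = 0 :=
    (ae_restrict_iff'₀ (hA.symmDiff hB)).1 <|
      (integral_eq_zero_iff_of_nonneg (fun ω => abs_nonneg (W ω - q))
        (hW.sub (integrable_const q)).abs.integrableOn).1 integral_eq_zero
  have B_le_A : B ≤ᵐ[μ] A := by
    filter_upwards [eq_on_symmDiff] with ω hω hωB
    by_contra hωA
    exact hωA (sub_eq_zero.1 (abs_eq_zero.1 (hω (Or.inr ⟨hωB, hωA⟩)))).ge
  exact (ae_eq_of_ae_subset_of_measure_ge B_le_A ((measureReal_eq_measureReal_iff).1 hμ).le hB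
    (measure_ne_top μ A)).symm

theorem tails_ae_eq_of_setIntegral_add_eq {Y Z : Ω → ℝ} {y z : ℝ} (hY : Integrable Y μ)
    (hZ : Integrable Z μ) (hB : NullMeasurableSet B μ)
    (hYB : μ.real {ω | y ≤ Y ω} = μ.real B) (hZB : μ.real {ω | z ≤ Z ω} = μ.real B)
    (hadd : ∫ ω in {ω | y ≤ Y ω}, Y ω ∂μ + ∫ ω in {ω | z ≤ Z ω}, Z ω ∂μ =
      ∫ ω in B, (Y ω + Z ω) ∂μ) :
    {ω | y ≤ Y ω} =ᵐ[μ] B ∧ {ω | z ≤ Z ω} =ᵐ[μ] B := by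
  have hYle := setIntegral_le_setIntegral_tail hY hB hYB
  have hZle := setIntegral_le_setIntegral_tail hZ hB hZB
  rw [integral_add hY.integrableOn hZ.integrableOn] at hadd
  exact ⟨tail_ae_eq_of_setIntegral_tail_le hY hB hYB (by linarith),
    tail_ae_eq_of_setIntegral_tail_le hZ hB hZB (by linarith)⟩

end TailIntegral

theorem exists_le_cdf_iff_le (ν : Measure ℝ) {α : ℝ} (hα : α ∈ Ioo (0 : ℝ) 1) :
    ∃ q, ∀ x, α ≤ cdf ν x ↔ q ≤ x := by
  obtain ⟨a, ha⟩ := ((tendsto_cdf_atBot ν).eventually_lt_const hα.1).exists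
  obtain ⟨b, hb⟩ := ((tendsto_cdf_atTop ν).eventually_const_lt hα.2).exists
  set S : Set ℝ := {x | α ≤ cdf ν x}
  have hS_nonempty : S.Nonempty := ⟨b, hb.le⟩
  have hS_bddBelow : BddBelow S :=
    ⟨a, fun x hx => ((monotone_cdf ν).reflect_lt (ha.trans_le hx)).le⟩
  have le_cdf_of_gt : ∀ x > sInf S, α ≤ cdf ν x := fun x hx => by
    obtain ⟨s, hs, hsx⟩ := exists_lt_of_csInf_lt hS_nonempty hx
    exact le_trans hs (monotone_cdf ν hsx.le)
  have le_cdf_sInf : α ≤ cdf ν (sInf S) :=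
    ge_of_tendsto (((cdf ν).right_continuous (sInf S)).mono Ioi_subset_Ici_self)
      (eventually_nhdsWithin_of_forall le_cdf_of_gt)
  exact ⟨sInf S, fun x =>
    ⟨fun hx => csInf_le hS_bddBelow hx, fun hx => le_cdf_sInf.trans (monotone_cdf ν hx)⟩⟩

theorem continuous_cdf (ν : Measure ℝ) [IsProbabilityMeasure ν] [NullSingletonClass ν] :
    Continuous (cdf ν) := by
  refine continuous_iff_continuousAt.2 fun x =>
    (monotone_cdf ν).continuousAt_iff_leftLim_eq_rightLim.2 ?_
  have jump_nonpos : cdf ν x - Function.leftLim (cdf ν) x ≤ 0 := by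
    rw [← ENNReal.ofReal_eq_zero, ← StieltjesFunction.measure_singleton, measure_cdf,
      measure_singleton]
  rw [StieltjesFunction.rightLim_eq]
  exact ((monotone_cdf ν).leftLim_le le_rfl).antisymm (sub_nonpos.1 jump_nonpos)

theorem measureReal_setOf_le_cdf (ν : Measure ℝ) [IsProbabilityMeasure ν] [NullSingletonClass ν]
    {α : ℝ} (hα : α ∈ Ioo (0 : ℝ) 1) : ν.real {x | α ≤ cdf ν x} = 1 - α := by
  obtain ⟨q, hq⟩ := exists_le_cdf_iff_le ν hα
  have superlevel_eq_Ici : {x | α ≤ cdf ν x} = Ici q := ext hq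
  have cdf_quantile : α = cdf ν q := by
    have q_mem_frontier : q ∈ frontier {x | α ≤ cdf ν x} := by
      rw [superlevel_eq_Ici, frontier_Ici]
      exact mem_singleton q
    exact frontier_le_subset_eq continuous_const (continuous_cdf ν) q_mem_frontier
  calc ν.real {x | α ≤ cdf ν x} = ν.real (Ioi q) := by
        rw [superlevel_eq_Ici]
        exact measureReal_congr Ioi_ae_eq_Ici.symm
    _ = 1 - ν.real (Iic q) := by
        rw [← compl_Iic, probReal_compl_eq_one_sub measurableSet_Iic]
    _ = 1 - α := by rw [← cdf_eq_real, ← cdf_quantile]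

theorem measurableSet_setOf_le_cdf (ν : Measure ℝ) (α : ℝ) : MeasurableSet {x | α ≤ cdf ν x} :=
  measurableSet_le measurable_const (monotone_cdf ν).measurable

theorem measureReal_setOf_le_cdf_map {Ω : Type*} [MeasurableSpace Ω] {μ : Measure Ω}
    [IsProbabilityMeasure μ] {W : Ω → ℝ} (hW : AEMeasurable W μ) [NullSingletonClass (μ.map W)]
    {α : ℝ} (hα : α ∈ Ioo (0 : ℝ) 1) :
    μ.real {ω | α ≤ cdf (μ.map W) (W ω)} = 1 - α := by
  have := Measure.isProbabilityMeasure_map hW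
  rw [← measureReal_setOf_le_cdf (μ.map W) hα,
    map_measureReal_apply_of_aemeasurable hW (measurableSet_setOf_le_cdf _ α)]
  rfl

theorem nullSingletonClass_map_of_hasPDF {Ω E : Type*} [MeasurableSpace Ω] [MeasurableSpace E]
    {μ : Measure Ω} {ν : Measure E} [NullSingletonClass ν] {X : Ω → E} (hX : HasPDF X μ ν) :
    NullSingletonClass (μ.map X) :=
  ⟨fun x => hX.absolutelyContinuous' (measure_singleton x)⟩

theorem statement16_general {Ω : Type*} [MeasurableSpace Ω] {μ : Measure Ω}
    [IsProbabilityMeasure μ] {α : ℝ} (hα : α ∈ Ioo (0 : ℝ) 1) {Y Z : Ω → ℝ}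
    (hYint : Integrable Y μ) (hZint : Integrable Z μ)
    (hY : NullSingletonClass (μ.map Y)) (hZ : NullSingletonClass (μ.map Z))
    (hYZ : NullSingletonClass (μ.map fun ω => Y ω + Z ω))
    (hzero :
      (∫ ω in {ω | α ≤ cdf (μ.map Y) (Y ω)}, Y ω ∂μ) +
        (∫ ω in {ω | α ≤ cdf (μ.map Z) (Z ω)}, Z ω ∂μ) -
        (∫ ω in {ω | α ≤ cdf (μ.map (fun ω' => Y ω' + Z ω')) (Y ω + Z ω)},
          (Y ω + Z ω) ∂μ) = 0) :
    {ω | α ≤ cdf (μ.map Y) (Y ω)} =ᵐ[μ] {ω | α ≤ cdf (μ.map Z) (Z ω)} ∧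
    {ω | α ≤ cdf (μ.map Y) (Y ω)} =ᵐ[μ]
      {ω | α ≤ cdf (μ.map (fun ω' => Y ω' + Z ω')) (Y ω + Z ω)} := by
  have hYZm : AEMeasurable (fun ω => Y ω + Z ω) μ := (hYint.add hZint).aemeasurable
  have hB := hYZm.nullMeasurableSet_preimage
    (measurableSet_setOf_le_cdf (μ.map fun ω => Y ω + Z ω) α)
  have hYα := measureReal_setOf_le_cdf_map hYint.aemeasurable hα
  have hZα := measureReal_setOf_le_cdf_map hZint.aemeasurable hα
  have hYZα := measureReal_setOf_le_cdf_map hYZm hα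
  obtain ⟨y, hy⟩ := exists_le_cdf_iff_le (μ.map Y) hα
  obtain ⟨z, hz⟩ := exists_le_cdf_iff_le (μ.map Z) hα
  simp only [hy, hz] at hYα hZα hzero ⊢
  obtain ⟨hYB, hZB⟩ := tails_ae_eq_of_setIntegral_add_eq hYint hZint hB
    (hYα.trans hYZα.symm) (hZα.trans hYZα.symm) (sub_eq_zero.1 hzero)
  exact ⟨hYB.trans hZB.symm, hYB⟩

/-- Comonotonicity lemma: if `Y`, `Z` and `Y + Z` have densities and
`E(Y·A_Y) + E(Z·A_Z) - E((Y+Z)·A_{Y+Z}) = 0`, where `A_W = 1_{F_W(W) ≥ α}`, then the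
events `{F_Y(Y) ≥ α}`, `{F_Z(Z) ≥ α}` and `{F_{Y+Z}(Y+Z) ≥ α}` coincide a.s. -/
theorem statement16 {Ω : Type*} [MeasurableSpace Ω] (μ : Measure Ω) [IsProbabilityMeasure μ]
    (α : ℝ) (hα : α ∈ Ioo (0 : ℝ) 1)
    (Y Z : Ω → ℝ) (hYm : Measurable Y) (hZm : Measurable Z)
    (hYint : Integrable Y μ) (hZint : Integrable Z μ)
    (hY : HasPDF Y μ) (hZ : HasPDF Z μ) (hYZ : HasPDF (fun ω => Y ω + Z ω) μ)
    (hzero :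
      (∫ ω in {ω | α ≤ cdf (μ.map Y) (Y ω)}, Y ω ∂μ) +
        (∫ ω in {ω | α ≤ cdf (μ.map Z) (Z ω)}, Z ω ∂μ) -
        (∫ ω in {ω | α ≤ cdf (μ.map (fun ω' => Y ω' + Z ω')) (Y ω + Z ω)},
          (Y ω + Z ω) ∂μ) = 0) :
    {ω | α ≤ cdf (μ.map Y) (Y ω)} =ᵐ[μ] {ω | α ≤ cdf (μ.map Z) (Z ω)} ∧
    {ω | α ≤ cdf (μ.map Y) (Y ω)} =ᵐ[μ]
      {ω | α ≤ cdf (μ.map (fun ω' => Y ω' + Z ω')) (Y ω + Z ω)} := by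
  exact statement16_general hα hYint hZint (nullSingletonClass_map_of_hasPDF hY)
    (nullSingletonClass_map_of_hasPDF hZ) (nullSingletonClass_map_of_hasPDF hYZ) hzero

end
end

section
/- Let 𝓡 be a connected subset of ℝ^d with non-empty interior, and let φ₁, φ₂ be two non-zero affine forms on ℝ^d. If φ₁(x)·φ₂(x) ≥ 0 for all x ∈ 𝓡 and the interior of 𝓡 meets the zero set of each φ_i (i = 1, 2), then there exists a > 0 such that φ₁ = a·φ₂. -/
open MeasureTheory ProbabilityTheory Filter Matrix Set

noncomputable section

/-!
Let `ℓ₁`, `ℓ₂` be the linear parts of `φ₁`, `φ₂`, and let `x` be a zero of `φ₁` around which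
`φ₁ φ₂ ≥ 0`. On a line through `x` transverse to the kernel of `φ₁`, the form `φ₁` changes sign
at `x`, so `φ₂` must change sign there too and hence vanishes at `x` by continuity. Both forms are
then linear in the displacement from `x`, so `ℓ₁ v * ℓ₂ v ≥ 0` for all `v`; scaling removes the
locality. Starting where `ℓ₁ ≠ 0` and moving along a direction in the kernel of `ℓ₁` keeps `ℓ₁`
constant, so `ℓ₂` cannot change sign on that line and is constant on it too. Hence
`ker ℓ₁ ≤ ker ℓ₂`, and `ℓ₁`, `ℓ₂` lie on a common ray.
-/

section LinearForms

variable {𝕜 V : Type*} [Field 𝕜] [LinearOrder 𝕜] [IsStrictOrderedRing 𝕜] [AddCommGroup V]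
  [Module 𝕜 V] {ℓ₁ ℓ₂ : Module.Dual 𝕜 V}

theorem apply_eq_zero_of_forall_mul_nonneg (h : ∀ v, 0 ≤ ℓ₁ v * ℓ₂ v) (hℓ₁ : ℓ₁ ≠ 0) {v : V}
    (hv : ℓ₁ v = 0) : ℓ₂ v = 0 := by
  obtain ⟨w, hw⟩ : ∃ w, ℓ₁ w ≠ 0 := DFunLike.ne_iff.1 hℓ₁
  by_contra hv₂
  let s : 𝕜 := (-ℓ₁ w - ℓ₂ w) / ℓ₂ v
  have hℓ₁s : ℓ₁ (w + s • v) = ℓ₁ w := by simp [hv]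
  have hℓ₂s : ℓ₂ (w + s • v) = -ℓ₁ w := by simp [s, div_mul_cancel₀ _ hv₂]
  have hsign : 0 ≤ ℓ₁ w * -ℓ₁ w := by simpa only [hℓ₁s, hℓ₂s] using h (w + s • v)
  linarith [mul_self_pos.2 hw]

theorem sameRay_of_forall_mul_nonneg (h : ∀ v, 0 ≤ ℓ₁ v * ℓ₂ v) : SameRay 𝕜 ℓ₁ ℓ₂ := by
  rcases eq_or_ne ℓ₁ 0 with rfl | hℓ₁
  · exact SameRay.zero_left ℓ₂
  obtain ⟨w, hw⟩ : ∃ w, ℓ₁ w ≠ 0 := DFunLike.ne_iff.1 hℓ₁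
  have hprop : ℓ₂ = (ℓ₂ w / ℓ₁ w) • ℓ₁ := by
    ext v
    have hker : ℓ₂ (v - (ℓ₁ v / ℓ₁ w) • w) = 0 :=
      apply_eq_zero_of_forall_mul_nonneg h hℓ₁ (by simp [hw])
    simp only [map_sub, map_smul, smul_eq_mul, LinearMap.smul_apply] at hker ⊢
    linear_combination hker
  have hratio : 0 ≤ ℓ₂ w / ℓ₁ w := by
    rw [← mul_div_mul_left _ _ hw]
    exact div_nonneg (h w) (mul_self_nonneg _)
  rw [hprop]
  exact SameRay.sameRay_nonneg_smul_right ℓ₁ hratio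

end LinearForms

section Coordinates

variable {R ι : Type*} [CommRing R] [Fintype ι]

/-- The affine form `x ↦ cᵀx + t` on `R^ι`, as a bundled affine map. -/
def affineForm (c : ι → R) (t : R) : (ι → R) →ᵃ[R] R :=
  (dotProductBilin R R c).toAffineMap + AffineMap.const R (ι → R) t

theorem affineForm_linear_ne_zero {c : ι → R} (t : R) (hc : c ≠ 0) :
    (affineForm c t).linear ≠ 0 := by
  intro h
  refine hc (dotProduct_eq_zero c fun v => ?_)
  simpa [affineForm] using LinearMap.congr_fun h v

end Coordinates

section AffineForms

open scoped Topology

theorem eventually_nonneg_mul_along_line {𝕜 V P : Type*} [Ring 𝕜] [LE 𝕜] [TopologicalSpace 𝕜]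
    [AddCommGroup V] [Module 𝕜 V] [TopologicalSpace V] [ContinuousSMul 𝕜 V] [TopologicalSpace P]
    [AddTorsor V P] [ContinuousVAdd V P] {φ₁ φ₂ : P →ᵃ[𝕜] 𝕜} {x : P} (hx : φ₁ x = 0)
    (h : ∀ᶠ y in 𝓝 x, 0 ≤ φ₁ y * φ₂ y) (v : V) :
    ∀ᶠ s : 𝕜 in 𝓝 0, 0 ≤ s * φ₁.linear v * (s * φ₂.linear v + φ₂ x) := by
  have hline : Tendsto (fun s : 𝕜 => s • v +ᵥ x) (𝓝 0) (𝓝 x) := by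
    have hcont : Continuous fun s : 𝕜 => s • v +ᵥ x := by fun_prop
    simpa using hcont.tendsto 0
  filter_upwards [hline.eventually h] with s hs
  simpa [hx] using hs

variable {𝕜 : Type*} [Field 𝕜] [LinearOrder 𝕜] [IsStrictOrderedRing 𝕜] [TopologicalSpace 𝕜]
  [OrderTopology 𝕜]

theorem eq_zero_of_eventually_sub_mul_nonneg {f : 𝕜 → 𝕜} {a : 𝕜} (hf : ContinuousAt f a)
    (h : ∀ᶠ s in 𝓝 a, 0 ≤ (s - a) * f s) : f a = 0 := by
  apply le_antisymm
  · refine le_of_tendsto (hf.mono_left (nhdsWithin_le_nhds (s := Iio a))) ?_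
    filter_upwards [nhdsWithin_le_nhds h, self_mem_nhdsWithin] with s hs hsa
    exact nonpos_of_mul_nonneg_right hs (sub_neg.2 hsa)
  · refine ge_of_tendsto (hf.mono_left (nhdsWithin_le_nhds (s := Ioi a))) ?_
    filter_upwards [nhdsWithin_le_nhds h, self_mem_nhdsWithin] with s hs hsa
    exact nonneg_of_mul_nonneg_right hs (sub_pos.2 hsa)

variable {V P : Type*} [AddCommGroup V] [Module 𝕜 V] [TopologicalSpace V] [ContinuousSMul 𝕜 V]
  [TopologicalSpace P] [AddTorsor V P] [ContinuousVAdd V P] {φ₁ φ₂ : P →ᵃ[𝕜] 𝕜} {x : P}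

theorem apply_eq_zero_of_eventually_mul_nonneg (hφ₁ : φ₁.linear ≠ 0) (hx : φ₁ x = 0)
    (h : ∀ᶠ y in 𝓝 x, 0 ≤ φ₁ y * φ₂ y) : φ₂ x = 0 := by
  obtain ⟨v, hv⟩ : ∃ v, φ₁.linear v ≠ 0 := DFunLike.ne_iff.1 hφ₁
  let f : 𝕜 → 𝕜 := fun s => φ₁.linear v * (s * φ₂.linear v + φ₂ x)
  have hf : Continuous f := by fun_prop
  have hf_zero : f 0 = 0 := by
    refine eq_zero_of_eventually_sub_mul_nonneg hf.continuousAt ?_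
    filter_upwards [eventually_nonneg_mul_along_line hx h v] with s hs
    simpa only [f, sub_zero, mul_assoc] using hs
  simpa [f, hv] using hf_zero

theorem linear_mul_linear_nonneg_of_eventually_mul_nonneg (hx₁ : φ₁ x = 0) (hx₂ : φ₂ x = 0)
    (h : ∀ᶠ y in 𝓝 x, 0 ≤ φ₁ y * φ₂ y) (v : V) : 0 ≤ φ₁.linear v * φ₂.linear v := by
  have hline : ∀ᶠ s : 𝕜 in 𝓝[>] 0, 0 ≤ s * φ₁.linear v * (s * φ₂.linear v + φ₂ x) :=
    nhdsWithin_le_nhds (eventually_nonneg_mul_along_line hx₁ h v)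
  obtain ⟨s, hs, hs_pos : 0 < s⟩ := (hline.and self_mem_nhdsWithin).exists
  refine nonneg_of_mul_nonneg_right ?_ (mul_pos hs_pos hs_pos)
  rwa [hx₂, add_zero, mul_mul_mul_comm] at hs

theorem statement17_general (hφ₁ : φ₁.linear ≠ 0) (hφ₂ : φ₂.linear ≠ 0) (hx : φ₁ x = 0)
    (hsign : ∀ᶠ y in 𝓝 x, 0 ≤ φ₁ y * φ₂ y) : ∃ a : 𝕜, 0 < a ∧ φ₁ = a • φ₂ := by
  have hx₂ : φ₂ x = 0 := apply_eq_zero_of_eventually_mul_nonneg hφ₁ hx hsign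
  have hray : SameRay 𝕜 φ₁.linear φ₂.linear := sameRay_of_forall_mul_nonneg
    (linear_mul_linear_nonneg_of_eventually_mul_nonneg hx hx₂ hsign)
  obtain ⟨a, ha, hlinear⟩ := hray.exists_pos_right hφ₁ hφ₂
  exact ⟨a, ha, AffineMap.ext_linear hlinear (p := x) (by simp [hx, hx₂])⟩

end AffineForms

/-- Affine-forms lemma: if `𝓡 ⊆ ℝ^d` is connected with non-empty interior, `φ₁, φ₂` are
non-zero affine forms with `φ₁ φ₂ ≥ 0` on `𝓡`, and the interior of `𝓡` meets the zero
set of each `φᵢ`, then `φ₁ = a φ₂` for some `a > 0`. -/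
theorem statement17 {d : ℕ} (R : Set (Fin d → ℝ)) (hconn : IsConnected R)
    (hint : (interior R).Nonempty)
    (c1 c2 : Fin d → ℝ) (t1 t2 : ℝ) (hc1 : c1 ≠ 0) (hc2 : c2 ≠ 0)
    (hsign : ∀ x ∈ R, 0 ≤ (c1 ⬝ᵥ x + t1) * (c2 ⬝ᵥ x + t2))
    (hk1 : (interior R ∩ {x : Fin d → ℝ | c1 ⬝ᵥ x + t1 = 0}).Nonempty)
    (hk2 : (interior R ∩ {x : Fin d → ℝ | c2 ⬝ᵥ x + t2 = 0}).Nonempty) :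
    ∃ a : ℝ, 0 < a ∧ ∀ x : Fin d → ℝ, c1 ⬝ᵥ x + t1 = a * (c2 ⬝ᵥ x + t2) := by
  obtain ⟨x, hxR, hx⟩ := hk1
  obtain ⟨a, ha, h⟩ := statement17_general (φ₁ := affineForm c1 t1) (φ₂ := affineForm c2 t2)
    (affineForm_linear_ne_zero t1 hc1) (affineForm_linear_ne_zero t2 hc2) hx
    (mem_of_superset (mem_interior_iff_mem_nhds.1 hxR) hsign)
  exact ⟨a, ha, DFunLike.congr_fun h⟩

end
end
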